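/- If X ~ N(0, Σ) is a d-dimensional Gaussian with d ≥ 2 and β ≠ 2, then for all continuously differentiable g with g and ∇g of at most polynomial growth, (β/((β-2)(d-1))) E[(Xᵀ Σ⁻¹ X · Σ - X Xᵀ) ∇g(X)] = E[(2/(β-2)) Σ ∇g(X) + X g(X)]. -/

import Mathlib

open MeasureTheory Real Matrix

/-- The gradient of `f : ℝ^d → ℝ` at `x`, as the vector of partial derivatives. -/
noncomputable def grad {d : ℕ} (f : (Fin d → ℝ) → ℝ) (x : Fin d → ℝ) : Fin d → ℝ :=
  fun i => fderiv ℝ f x (Pi.single i 1)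

/-- Functions of at most polynomial growth. -/
def PolyG {d : ℕ} (f : (Fin d → ℝ) → ℝ) : Prop :=
  ∃ (C : ℝ) (n : ℕ), ∀ x, |f x| ≤ C * (1 + ‖x‖) ^ n

theorem PolyG.nonneg_const {d : ℕ} {f : (Fin d → ℝ) → ℝ} (hf : PolyG f) :
    ∃ (C : ℝ) (n : ℕ), 0 ≤ C ∧ ∀ x, |f x| ≤ C * (1 + ‖x‖) ^ n := by
  obtain ⟨C, n, h⟩ := hf
  refine ⟨|C|, n, abs_nonneg _, fun x => (h x).trans ?_⟩
  gcongr
  exact le_abs_self C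

theorem PolyG.mul {d : ℕ} {f g : (Fin d → ℝ) → ℝ} (hf : PolyG f) (hg : PolyG g) :
    PolyG (fun x => f x * g x) := by
  obtain ⟨C, n, hC, h⟩ := hf.nonneg_const
  obtain ⟨C', n', hC', h'⟩ := hg.nonneg_const
  refine ⟨C * C', n + n', fun x => ?_⟩
  rw [abs_mul, pow_add]
  calc |f x| * |g x| ≤ (C * (1 + ‖x‖) ^ n) * (C' * (1 + ‖x‖) ^ n') := by
        gcongr
        · exact h x
        · exact h' x
    _ = _ := by ring

theorem PolyG.add {d : ℕ} {f g : (Fin d → ℝ) → ℝ} (hf : PolyG f) (hg : PolyG g) :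
    PolyG (fun x => f x + g x) := by
  obtain ⟨C, n, hC, h⟩ := hf.nonneg_const
  obtain ⟨C', n', hC', h'⟩ := hg.nonneg_const
  refine ⟨C + C', n + n', fun x => ?_⟩
  have h1 : (1 : ℝ) ≤ 1 + ‖x‖ := by linarith [norm_nonneg x]
  calc |f x + g x| ≤ |f x| + |g x| := abs_add_le _ _
    _ ≤ C * (1 + ‖x‖) ^ n + C' * (1 + ‖x‖) ^ n' := add_le_add (h x) (h' x)
    _ ≤ C * (1 + ‖x‖) ^ (n + n') + C' * (1 + ‖x‖) ^ (n + n') := by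
        gcongr <;> first | exact h1 | omega
    _ = _ := by ring

theorem PolyG.const {d : ℕ} (c : ℝ) : PolyG (fun _ : Fin d → ℝ => c) :=
  ⟨|c|, 0, fun x => by simp⟩

theorem PolyG.coord {d : ℕ} (i : Fin d) : PolyG (fun x : Fin d → ℝ => x i) :=
  ⟨1, 1, fun x => by
    have := norm_le_pi_norm x i
    rw [Real.norm_eq_abs] at this
    linarith⟩

theorem PolyG.neg {d : ℕ} {f : (Fin d → ℝ) → ℝ} (hf : PolyG f) : PolyG (fun x => - f x) := by
  obtain ⟨C, n, h⟩ := hf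
  exact ⟨C, n, fun x => by rw [abs_neg]; exact h x⟩

theorem PolyG.sub {d : ℕ} {f g : (Fin d → ℝ) → ℝ} (hf : PolyG f) (hg : PolyG g) :
    PolyG (fun x => f x - g x) := by
  simpa only [sub_eq_add_neg] using hf.add hg.neg

theorem PolyG.sum {d : ℕ} {ι : Type*} (s : Finset ι) {f : ι → (Fin d → ℝ) → ℝ}
    (hf : ∀ i, PolyG (f i)) : PolyG (fun x => ∑ i ∈ s, f i x) := by
  classical
  induction s using Finset.induction_on with
  | empty => simpa using PolyG.const 0
  | insert a s ha ih =>
    simp only [Finset.sum_insert ha]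
    exact (hf a).add ih

theorem PolyG.mulVec {d : ℕ} (M : Matrix (Fin d) (Fin d) ℝ) (j : Fin d) :
    PolyG (fun x => M.mulVec x j) := by
  simp only [Matrix.mulVec, dotProduct]
  exact PolyG.sum _ fun k => (PolyG.const _).mul (PolyG.coord k)

theorem PolyG.quad {d : ℕ} (M : Matrix (Fin d) (Fin d) ℝ) :
    PolyG (fun x => dotProduct x (M.mulVec x)) := by
  simp only [dotProduct]
  exact PolyG.sum _ fun k => (PolyG.coord k).mul (PolyG.mulVec M k)

theorem quad_lower {d : ℕ} (M : Matrix (Fin d) (Fin d) ℝ) (hM : M.PosDef) :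
    ∃ c : ℝ, 0 < c ∧ ∀ x : Fin d → ℝ, c * ‖x‖ ^ 2 ≤ dotProduct x (M.mulVec x) := by
  have hpos : ∀ x : Fin d → ℝ, x ≠ 0 → 0 < dotProduct x (M.mulVec x) := by
    intro x hx
    simpa using hM.dotProduct_mulVec_pos hx
  have hcont : Continuous (fun x : Fin d → ℝ => dotProduct x (M.mulVec x)) := by fun_prop
  rcases (Metric.sphere (0 : Fin d → ℝ) 1).eq_empty_or_nonempty with he | hne
  · refine ⟨1, one_pos, fun x => ?_⟩
    by_cases hx : x = 0
    · simp [hx]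
    · exfalso
      have : (‖x‖⁻¹ • x) ∈ Metric.sphere (0 : Fin d → ℝ) 1 := by
        simp [norm_smul, hx]
      simp [he] at this
  · obtain ⟨y, hy, hmin⟩ := (isCompact_sphere (0 : Fin d → ℝ) 1).exists_isMinOn hne hcont.continuousOn
    have hy0 : y ≠ 0 := by
      rintro rfl
      simp at hy
    refine ⟨_, hpos y hy0, fun x => ?_⟩
    by_cases hx : x = 0
    · simp [hx]
    · have hx' : ‖x‖ ≠ 0 := by simpa using hx
      have h1 : (‖x‖⁻¹ • x) ∈ Metric.sphere (0 : Fin d → ℝ) 1 := by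
        simp [norm_smul, hx]
      have h2 := hmin h1
      simp only [Set.mem_ofPred_eq, Matrix.mulVec_smul, dotProduct_smul, smul_dotProduct,
        smul_eq_mul] at h2
      calc _ ≤ (‖x‖⁻¹ * (‖x‖⁻¹ * dotProduct x (M.mulVec x))) * ‖x‖ ^ 2 := by gcongr
        _ = _ := by field_simp

theorem exp_decay (c : ℝ) (hc : 0 < c) (N : ℕ) :
    ∃ K : ℝ, 0 ≤ K ∧ ∀ r : ℝ, 0 ≤ r → (1 + r) ^ N * Real.exp (-(c * r ^ 2)) ≤ K := by
  refine ⟨(2 / c) ^ N * (N.factorial : ℝ) * Real.exp c, by positivity, fun r hr => ?_⟩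
  have hy : 0 ≤ c * (1 + r ^ 2) := by positivity
  have h1 := Real.pow_div_factorial_le_exp (c * (1 + r ^ 2)) hy N
  rw [div_le_iff₀ (by positivity)] at h1
  have h2 : (1 + r) ^ N ≤ (2 * (1 + r ^ 2)) ^ N := by
    gcongr
    nlinarith [sq_nonneg (r - 1)]
  have h3 : (2 * (1 + r ^ 2)) ^ N = (2 / c) ^ N * (c * (1 + r ^ 2)) ^ N := by
    rw [← mul_pow]
    congr 1
    field_simp
  calc _ ≤ ((2 / c) ^ N * (Real.exp (c * (1 + r ^ 2)) * (N.factorial : ℝ))) *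
        Real.exp (-(c * r ^ 2)) := by
        gcongr
        rw [h3] at h2
        exact h2.trans (by gcongr)
    _ = (2 / c) ^ N * (N.factorial : ℝ) *
        (Real.exp (c * (1 + r ^ 2)) * Real.exp (-(c * r ^ 2))) := by ring
    _ ≤ _ := by
        rw [← Real.exp_add]
        apply le_of_eq
        congr 2
        ring

theorem PolyG.integrable {d : ℕ} (M : Matrix (Fin d) (Fin d) ℝ) (hM : M.PosDef)
    {f : (Fin d → ℝ) → ℝ} (hf : PolyG f) (hc : Continuous f) :
    Integrable (fun x => f x * Real.exp (-(dotProduct x (M.mulVec x)) / 2)) := by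
  obtain ⟨C, n, hC, h⟩ := hf.nonneg_const
  obtain ⟨c, hc0, hq⟩ := quad_lower M hM
  obtain ⟨K, hK, hdec⟩ := exp_decay (c / 2) (by positivity) (n + (d + 1))
  have hint := (integrable_one_add_norm (E := Fin d → ℝ) (μ := volume) (r := (d : ℝ) + 1)
    (by simp)).const_mul (C * K)
  refine hint.mono' (by fun_prop) (Filter.Eventually.of_forall fun x => ?_)
  have hx := norm_nonneg x
  rw [norm_mul, Real.norm_eq_abs, Real.norm_eq_abs, Real.abs_exp, Real.rpow_neg (by positivity)]
  have e1 : (1 + ‖x‖) ^ ((d : ℝ) + 1) = (1 + ‖x‖) ^ (d + 1) := by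
    exact_mod_cast Real.rpow_natCast (1 + ‖x‖) (d + 1)
  rw [e1, ← div_eq_mul_inv, le_div_iff₀ (by positivity)]
  have e2 : Real.exp (-(dotProduct x (M.mulVec x)) / 2) ≤ Real.exp (-(c / 2 * ‖x‖ ^ 2)) := by
    apply Real.exp_le_exp.mpr
    linarith [hq x]
  calc _ ≤ (C * (1 + ‖x‖) ^ n) * Real.exp (-(c / 2 * ‖x‖ ^ 2)) * (1 + ‖x‖) ^ (d + 1) := by
        gcongr
        exact h x
    _ = C * ((1 + ‖x‖) ^ (n + (d + 1)) * Real.exp (-(c / 2 * ‖x‖ ^ 2))) := by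
        rw [pow_add]; ring
    _ ≤ C * K := by gcongr; exact hdec _ hx

theorem quad_deriv {d : ℕ} (M : Matrix (Fin d) (Fin d) ℝ) (hM : M.IsSymm) (x : Fin d → ℝ) :
    ∃ L : (Fin d → ℝ) →L[ℝ] ℝ,
      HasFDerivAt (fun x : Fin d → ℝ => dotProduct x (M.mulVec x)) L x ∧
      ∀ v, L v = 2 * dotProduct v (M.mulVec x) := by
  have hL : ∀ k, HasFDerivAt (fun y : Fin d → ℝ => M.mulVec y k)
      ((ContinuousLinearMap.proj k).comp (Matrix.mulVecLin M).toContinuousLinearMap) x :=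
    fun k => ((ContinuousLinearMap.proj (R := ℝ) (φ := fun _ : Fin d => ℝ) k).comp
      (Matrix.mulVecLin M).toContinuousLinearMap).hasFDerivAt
  have h := HasFDerivAt.fun_sum (u := Finset.univ)
    (fun k _ => (hasFDerivAt_apply (𝕜 := ℝ) (F' := fun _ : Fin d => ℝ) k x).mul (hL k))
  refine ⟨_, h, fun v => ?_⟩
  have hs : dotProduct x (M.mulVec v) = dotProduct v (M.mulVec x) := by
    rw [Matrix.dotProduct_mulVec, ← Matrix.mulVec_transpose, hM.eq, dotProduct_comm]
  rw [two_mul]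
  nth_rewrite 1 [← hs]
  simp [dotProduct, Finset.sum_add_distrib, mul_comm]

/-- Integration by parts against the Gaussian weight, along one coordinate. -/
theorem gauss_ibp {d : ℕ} (M : Matrix (Fin d) (Fin d) ℝ) (hM : M.PosDef) (j : Fin d)
    (g : (Fin d → ℝ) → ℝ) (hg : ContDiff ℝ 1 g) (hgp : PolyG g) (hgp' : PolyG (fun x => grad g x j))
    (w w' : (Fin d → ℝ) → ℝ) (hw : ContDiff ℝ 1 w) (hw' : ∀ x, grad w x j = w' x)
    (hwp : PolyG w) (hwp' : PolyG w') :
    ∫ x, (w x * grad g x j) * Real.exp (-(dotProduct x (M.mulVec x)) / 2) =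
    ∫ x, (g x * (w x * M.mulVec x j - w' x)) * Real.exp (-(dotProduct x (M.mulVec x)) / 2) := by
  have hsym : M.IsSymm := by
    have := hM.1
    simpa [Matrix.IsHermitian, Matrix.IsSymm] using this
  set E : (Fin d → ℝ) → ℝ := fun x => Real.exp (-(dotProduct x (M.mulVec x)) / 2) with hE
  have hgc : Continuous (fun x => grad g x j) :=
    (hg.continuous_fderiv (by norm_num)).clm_apply continuous_const
  have hwc : Continuous w' := by
    have : Continuous (fun x => grad w x j) :=
      (hw.continuous_fderiv (by norm_num)).clm_apply continuous_const
    simpa only [hw'] using this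
  have hwd : Differentiable ℝ w := hw.differentiable (by norm_num)
  have hgd : Differentiable ℝ g := hg.differentiable (by norm_num)
  have key : ∀ x, DifferentiableAt ℝ (fun y => w y * E y) x ∧
      fderiv ℝ (fun y => w y * E y) x (Pi.single j 1) = (w' x - w x * M.mulVec x j) * E x := by
    intro x
    obtain ⟨L, hL, hLv⟩ := quad_deriv M hsym x
    have h1 : HasFDerivAt E _ x := ((hL.neg).mul_const (2⁻¹ : ℝ)).exp
    have h2 := (hwd x).hasFDerivAt.mul h1
    refine ⟨h2.differentiableAt, ?_⟩
    have h3 := h2.fderiv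
    have h4 : fderiv ℝ (fun y => w y * E y) x = _ := h3
    rw [h4]
    have h5 := hw' x
    simp only [grad] at h5
    simp [hLv, h5, hE, div_eq_mul_inv]
    ring
  have hwE := integral_mul_fderiv_eq_neg_fderiv_mul_of_integrable (μ := (volume : Measure (Fin d → ℝ)))
    (f := fun y => w y * E y) (g := g) (v := Pi.single j 1) ?_ ?_ ?_
    (fun x _ => (key x).1) (fun x _ => hgd x)
  · calc _ = ∫ x, w x * E x * fderiv ℝ g x (Pi.single j 1) := by
          congr 1; ext x; simp only [grad]; ring
      _ = _ := by
          rw [hwE, ← integral_neg]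
          congr 1; ext x
          rw [(key x).2]; ring
  · have := PolyG.integrable M hM ((hwp'.sub (hwp.mul (PolyG.mulVec M j))).mul hgp)
      (by have := hgd.continuous; have := hwd.continuous; fun_prop)
    refine this.congr (Filter.Eventually.of_forall fun x => ?_)
    show _ = fderiv ℝ (fun y => w y * E y) x (Pi.single j 1) * g x
    rw [(key x).2]; simp only [hE]; ring
  · have := PolyG.integrable M hM (hwp.mul hgp')
      (by have := hwd.continuous; fun_prop)
    refine this.congr (Filter.Eventually.of_forall fun x => ?_)
    simp only [grad, hE]; ring
  · have := PolyG.integrable M hM (hwp.mul hgp)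
      (by have := hgd.continuous; have := hwd.continuous; fun_prop)
    refine this.congr (Filter.Eventually.of_forall fun x => ?_)
    simp only [hE]; ring

/-- Vector version. -/
theorem gauss_ibp_sum {d : ℕ} (M : Matrix (Fin d) (Fin d) ℝ) (hM : M.PosDef)
    (g : (Fin d → ℝ) → ℝ) (hg : ContDiff ℝ 1 g) (hgp : PolyG g)
    (hgp' : ∀ j, PolyG (fun x => grad g x j))
    (w w' : Fin d → (Fin d → ℝ) → ℝ) (hw : ∀ j, ContDiff ℝ 1 (w j))
    (hw' : ∀ j x, grad (w j) x j = w' j x)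
    (hwp : ∀ j, PolyG (w j)) (hwp' : ∀ j, PolyG (w' j)) :
    ∫ x, (∑ j, w j x * grad g x j) * Real.exp (-(dotProduct x (M.mulVec x)) / 2) =
    ∫ x, (g x * ∑ j, (w j x * M.mulVec x j - w' j x)) *
      Real.exp (-(dotProduct x (M.mulVec x)) / 2) := by
  have hgd : Continuous g := hg.continuous
  simp only [Finset.mul_sum, Finset.sum_mul]
  rw [integral_finsetSum, integral_finsetSum]
  · exact Finset.sum_congr rfl fun j _ =>
      gauss_ibp M hM j g hg hgp (hgp' j) (w j) (w' j) (hw j) (hw' j) (hwp j) (hwp' j)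
  · intro j _
    have hwc : Continuous (w' j) := by
      have : Continuous (fun x => grad (w j) x j) :=
        ((hw j).continuous_fderiv (by norm_num)).clm_apply continuous_const
      simpa only [hw'] using this
    have := (hw j).continuous
    exact PolyG.integrable M hM (hgp.mul (((hwp j).mul (PolyG.mulVec M j)).sub (hwp' j)))
      (by fun_prop)
  · intro j _
    have hgc : Continuous (fun x => grad g x j) :=
      (hg.continuous_fderiv (by norm_num)).clm_apply continuous_const
    have := (hw j).continuous
    exact PolyG.integrable M hM ((hwp j).mul (hgp' j)) (by fun_prop)

/-- For `X ~ N(0, S)` with `d ≥ 2` and `β ≠ 2`, and `g` continuously differentiable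
with `g` and `∇g` of at most polynomial growth,
`(β/((β-2)(d-1))) E[(Xᵀ S⁻¹ X · S - X Xᵀ) ∇g(X)] = E[(2/(β-2)) S ∇g(X) + X g(X)]`. -/
theorem gaussian_generalized_stein_identity (d : ℕ) (hd : 2 ≤ d)
    (S : Matrix (Fin d) (Fin d) ℝ) (hS : S.PosDef) (β : ℝ) (hβ : β ≠ 2)
    (p : (Fin d → ℝ) → ℝ)
    (hp : ∀ x, p x = (2 * π) ^ (-(d : ℝ) / 2) * S.det ^ (-(1 : ℝ) / 2) *
      Real.exp (-(dotProduct x (S⁻¹.mulVec x)) / 2))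
    (g : (Fin d → ℝ) → ℝ) (hg : ContDiff ℝ 1 g)
    (C : ℝ) (n : ℕ) (hgrow : ∀ x, |g x| ≤ C * (1 + ‖x‖) ^ n)
    (C' : ℝ) (n' : ℕ) (hgrow' : ∀ x i, |grad g x i| ≤ C' * (1 + ‖x‖) ^ n') :
    ∀ i, (β / ((β - 2) * ((d : ℝ) - 1))) *
        ∫ x, (((dotProduct x (S⁻¹.mulVec x)) • S - Matrix.vecMulVec x x).mulVec
          (grad g x)) i * p x
      = ∫ x, ((2 / (β - 2)) * (S.mulVec (grad g x)) i + x i * g x) * p x := by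
  intro i
  have hMd : S⁻¹.PosDef := hS.inv
  have hsym : (S⁻¹).IsSymm := by
    have := hMd.1
    simpa [Matrix.IsHermitian, Matrix.IsSymm] using this
  have hSM : ∀ x : Fin d → ℝ, ∑ j, S i j * (S⁻¹).mulVec x j = x i := by
    intro x
    have h1 : S.mulVec ((S⁻¹).mulVec x) = x := by
      rw [Matrix.mulVec_mulVec, Matrix.mul_nonsing_inv _ ((Matrix.isUnit_iff_isUnit_det S).mp hS.isUnit),
        Matrix.one_mulVec]
    exact congrFun h1 i
  have hgp : PolyG g := ⟨C, n, hgrow⟩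
  have hgp' : ∀ j, PolyG (fun x => grad g x j) := fun j => ⟨C', n', fun x => hgrow' x j⟩
  have hgc : Continuous g := hg.continuous
  have hgc' : ∀ j, Continuous (fun x => grad g x j) := fun j =>
    (hg.continuous_fderiv (by norm_num)).clm_apply continuous_const
  set K : ℝ := (2 * π) ^ (-(d : ℝ) / 2) * S.det ^ (-(1 : ℝ) / 2) with hK
  set M := S⁻¹ with hMdef
  have hqc : ContDiff ℝ 1 (fun x : Fin d → ℝ => dotProduct x (M.mulVec x)) := by
    simp only [dotProduct, Matrix.mulVec]
    fun_prop
  -- first identity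
  have I1 := gauss_ibp_sum M hMd g hg hgp hgp'
    (fun j x => dotProduct x (M.mulVec x) * S i j - x i * x j)
    (fun j x => 2 * M.mulVec x j * S i j - ((if i = j then 1 else 0) * x j + x i))
    (fun j => by fun_prop)
    (fun j x => by
      obtain ⟨L, hL, hLv⟩ := quad_deriv M hsym x
      have h := (hL.mul_const (S i j)).sub
        ((hasFDerivAt_apply (𝕜 := ℝ) (F' := fun _ : Fin d => ℝ) i x).mul
          (hasFDerivAt_apply (𝕜 := ℝ) (F' := fun _ : Fin d => ℝ) j x))
      have h4 : fderiv ℝ (fun x : Fin d → ℝ =>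
        dotProduct x (M.mulVec x) * S i j - x i * x j) x = _ := h.fderiv
      simp only [grad]
      rw [h4]
      simp [hLv, Pi.single_apply]
      split_ifs <;> ring)
    (fun j => ((PolyG.quad M).mul (PolyG.const _)).sub ((PolyG.coord i).mul (PolyG.coord j)))
    (fun j => (((PolyG.const 2).mul (PolyG.mulVec M j)).mul (PolyG.const _)).sub
      (((PolyG.const _).mul (PolyG.coord j)).add (PolyG.coord i)))
  have I2 := gauss_ibp_sum M hMd g hg hgp hgp'
    (fun j _ => S i j) (fun _ _ => 0) (fun j => contDiff_const)
    (fun j x => by simp [grad])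
    (fun j => PolyG.const _) (fun j => PolyG.const 0)
  set E : (Fin d → ℝ) → ℝ := fun x => Real.exp (-(dotProduct x (M.mulVec x)) / 2) with hE
  set J : ℝ := ∫ x, (x i * g x) * E x with hJ
  have J1 : ∫ x, (((dotProduct x (M.mulVec x)) • S - Matrix.vecMulVec x x).mulVec
          (grad g x)) i * p x = K * (((d : ℝ) - 1) * J) := by
    have e : ∀ x, (((dotProduct x (M.mulVec x)) • S - Matrix.vecMulVec x x).mulVec
          (grad g x)) i * p x = K * ((∑ j, (dotProduct x (M.mulVec x) * S i j - x i * x j) *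
            grad g x j) * E x) := by
      intro x
      rw [hp x]
      simp only [Matrix.mulVec, dotProduct, Matrix.sub_apply, Matrix.smul_apply,
        Matrix.vecMulVec_apply, smul_eq_mul, hE]
      ring
    simp only [e]
    rw [integral_const_mul, I1]
    congr 1
    rw [hJ, ← integral_const_mul]
    refine integral_congr_ae (Filter.Eventually.of_forall fun x => ?_)
    beta_reduce
    have s : ∑ j, ((dotProduct x (M.mulVec x) * S i j - x i * x j) * M.mulVec x j -
        (2 * M.mulVec x j * S i j - ((if i = j then 1 else 0) * x j + x i))) =
        ((d : ℝ) - 1) * x i := by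
      have t : ∀ j, ((dotProduct x (M.mulVec x) * S i j - x i * x j) * M.mulVec x j -
        (2 * M.mulVec x j * S i j - ((if i = j then 1 else 0) * x j + x i))) =
        (dotProduct x (M.mulVec x) - 2) * (S i j * M.mulVec x j) -
          x i * (x j * M.mulVec x j) + (if i = j then x j else 0) + x i := by
        intro j
        split_ifs <;> ring
      simp only [t, Finset.sum_add_distrib, Finset.sum_sub_distrib, ← Finset.mul_sum, hSM]
      have u : ∑ j, x j * M.mulVec x j = dotProduct x (M.mulVec x) := rfl
      rw [u]
      simp
      ring
    rw [s]
    ring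
  have J2 : ∫ x, (∑ j, S i j * grad g x j) * E x = J := by
    rw [I2]
    congr 1
    ext x
    simp only [sub_zero, hSM]
    ring
  have J3 : ∫ x, ((2 / (β - 2)) * (S.mulVec (grad g x)) i + x i * g x) * p x =
      K * ((2 / (β - 2)) * J + J) := by
    have e : ∀ x, ((2 / (β - 2)) * (S.mulVec (grad g x)) i + x i * g x) * p x =
        K * ((2 / (β - 2)) * ((∑ j, S i j * grad g x j) * E x) + (x i * g x) * E x) := by
      intro x
      rw [hp x]
      simp only [Matrix.mulVec, dotProduct, hE]
      ring
    simp only [e]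
    rw [integral_const_mul, integral_add, integral_const_mul, J2]
    · exact (PolyG.integrable M hMd (PolyG.sum _ fun j => (PolyG.const (S i j)).mul (hgp' j))
        (by fun_prop)).const_mul _
    · exact PolyG.integrable M hMd ((PolyG.coord i).mul hgp) (by fun_prop)
  rw [J1, J3]
  have hd1 : (d : ℝ) - 1 ≠ 0 := by
    have : (2 : ℝ) ≤ d := by exact_mod_cast hd
    linarith
  have hb : β - 2 ≠ 0 := sub_ne_zero.mpr hβ
  field_simp
  ring
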